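/- For all a, b, c ∈ {-2,-1,0,1}, the Weyl group W acts transitively on the set {(e1,e2,e3) ∈ E³ : e1·e2 = a, e2·e3 = b, e1·e3 = c} whenever it is nonempty; that is, for any two triples (e1,e2,e3), (f1,f2,f3) of roots with e1·e2 = f1·f2 = a, e2·e3 = f2·f3 = b and e1·e3 = f1·f3 = c, there exists w ∈ W with w(e_i) = f_i for i = 1,2,3. -/

import Mathlib

noncomputable section

/-- The standard dot product on ℝ^8. -/
def dot (a b : Fin 8 → ℝ) : ℝ := ∑ i, a i * b i

/-- Membership in the E8 lattice Λ: all coordinates are integers or all lie in ℤ + 1/2,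
and the coordinates sum to an even integer. -/
def inLambda (a : Fin 8 → ℝ) : Prop :=
  ((∀ i, ∃ n : ℤ, a i = n) ∨ (∀ i, ∃ n : ℤ, a i = n + 1 / 2)) ∧
    ∃ n : ℤ, (∑ i, a i) = 2 * n

/-- The E8 root system E: lattice vectors of squared norm 2. -/
def isRoot (a : Fin 8 → ℝ) : Prop := inLambda a ∧ dot a a = 2

/-- The Weyl group W: linear isometries of ℝ^8 mapping the root system E onto itself. -/
def IsWeyl (w : (Fin 8 → ℝ) ≃ₗ[ℝ] (Fin 8 → ℝ)) : Prop :=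
  (∀ a b : Fin 8 → ℝ, dot (w a) (w b) = dot a b) ∧
    (⇑w '' {a | isRoot a} = {a | isRoot a})


structure V8 where
  x0 : ℤ
  x1 : ℤ
  x2 : ℤ
  x3 : ℤ
  x4 : ℤ
  x5 : ℤ
  x6 : ℤ
  x7 : ℤ
deriving DecidableEq

namespace V8

/-- doubled coordinates -/
def toR (v : V8) : Fin 8 → ℝ :=
  ![v.x0 / 2, v.x1 / 2, v.x2 / 2, v.x3 / 2, v.x4 / 2, v.x5 / 2, v.x6 / 2, v.x7 / 2]

def D (v u : V8) : ℤ :=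
  v.x0 * u.x0 + v.x1 * u.x1 + v.x2 * u.x2 + v.x3 * u.x3 + v.x4 * u.x4 + v.x5 * u.x5 +
    v.x6 * u.x6 + v.x7 * u.x7

def sm (v : V8) : ℤ := v.x0 + v.x1 + v.x2 + v.x3 + v.x4 + v.x5 + v.x6 + v.x7

def frc (n : ℤ) (k : ℤ → V8) : V8 :=
  if n = 0 then k 0 else if n = 2 then k 2 else if n = -2 then k (-2) else
  if n = 1 then k 1 else if n = -1 then k (-1) else k n

theorem frc_eq (n : ℤ) (k : ℤ → V8) : frc n k = k n := by
  unfold frc; split_ifs <;> simp_all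

def addm (x s : V8) (m : ℤ) : V8 :=
  frc (x.x0 + m * s.x0) fun a0 => frc (x.x1 + m * s.x1) fun a1 =>
  frc (x.x2 + m * s.x2) fun a2 => frc (x.x3 + m * s.x3) fun a3 =>
  frc (x.x4 + m * s.x4) fun a4 => frc (x.x5 + m * s.x5) fun a5 =>
  frc (x.x6 + m * s.x6) fun a6 => frc (x.x7 + m * s.x7) fun a7 => ⟨a0, a1, a2, a3, a4, a5, a6, a7⟩

inductive Q where
  | q0 | q1 | q2 | q3 | q4 | q5 | q6 | q7

open Q

def vec : Q → V8
  | q0 => ⟨0, 0, 0, 0, 0, 0, 2, -2⟩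
  | q1 => ⟨0, 0, 0, 0, 0, 0, 2, 2⟩
  | q2 => ⟨0, 0, 0, 0, 0, 2, -2, 0⟩
  | q3 => ⟨0, 0, 0, 0, 2, -2, 0, 0⟩
  | q4 => ⟨0, 0, 0, 2, -2, 0, 0, 0⟩
  | q5 => ⟨0, 0, 2, -2, 0, 0, 0, 0⟩
  | q6 => ⟨0, 2, -2, 0, 0, 0, 0, 0⟩
  | q7 => ⟨1, -1, -1, -1, -1, -1, -1, 1⟩

def step (x : V8) (s : Q) : V8 :=
  match x with
  | ⟨a, b, c, d, e, f, g, h⟩ =>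
    match s with
    | q0 => if g < h then ⟨a, b, c, d, e, f, h, g⟩ else ⟨a, b, c, d, e, f, g, h⟩
    | q1 => if g < -h then frc (-h) fun h' => frc (-g) fun g' => ⟨a, b, c, d, e, f, h', g'⟩
            else ⟨a, b, c, d, e, f, g, h⟩
    | q2 => if f < g then ⟨a, b, c, d, e, g, f, h⟩ else ⟨a, b, c, d, e, f, g, h⟩
    | q3 => if e < f then ⟨a, b, c, d, f, e, g, h⟩ else ⟨a, b, c, d, e, f, g, h⟩
    | q4 => if d < e then ⟨a, b, c, e, d, f, g, h⟩ else ⟨a, b, c, d, e, f, g, h⟩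
    | q5 => if c < d then ⟨a, b, d, c, e, f, g, h⟩ else ⟨a, b, c, d, e, f, g, h⟩
    | q6 => if b < c then ⟨a, c, b, d, e, f, g, h⟩ else ⟨a, b, c, d, e, f, g, h⟩
    | q7 => if a + h = b + c + d + e + f + g - 4 then
              addm ⟨a, b, c, d, e, f, g, h⟩ ⟨1, -1, -1, -1, -1, -1, -1, 1⟩ 1
            else if a + h = b + c + d + e + f + g - 8 then
              addm ⟨a, b, c, d, e, f, g, h⟩ ⟨1, -1, -1, -1, -1, -1, -1, 1⟩ 2
            else ⟨a, b, c, d, e, f, g, h⟩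

def red (w : List Q) (x : V8) : V8 := w.foldl step x

def th : V8 := ⟨2, 2, 0, 0, 0, 0, 0, 0⟩

def rep (n : ℕ) (l : List Q) : List Q := (List.replicate n l).flatten

def w0 : List Q := rep 15 [q0, q1, q2, q3, q4, q5, q6, q7]
def w1 : List Q := rep 9 [q0, q1, q2, q3, q4, q5, q7]
def w2 (d : ℤ) : List Q :=
  if d = 0 then rep 5 [q0, q1, q2, q3, q4, q5] else
  if d = 4 then rep 6 [q0, q1, q2, q4, q3, q7] else
  if d = -4 then rep 6 [q0, q1, q2, q4, q3, q7] else w1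

def c2 (d : ℤ) : V8 :=
  if d = 0 then ⟨2, -2, 0, 0, 0, 0, 0, 0⟩ else
  if d = 4 then ⟨2, 0, 2, 0, 0, 0, 0, 0⟩ else
  if d = -4 then ⟨0, -2, 2, 0, 0, 0, 0, 0⟩ else
  if d = 8 then th else ⟨-2, -2, 0, 0, 0, 0, 0, 0⟩

def c3 (d b c : ℤ) : V8 :=
  if d = -8 ∧ b = -8 ∧ c = 8 then ⟨-2,-2,0,0,0,0,0,0⟩ else
  if d = -8 ∧ b = -4 ∧ c = 4 then ⟨0,-2,2,0,0,0,0,0⟩ else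
  if d = -8 ∧ b = 0 ∧ c = 0 then ⟨2,-2,0,0,0,0,0,0⟩ else
  if d = -8 ∧ b = 4 ∧ c = -4 then ⟨2,0,2,0,0,0,0,0⟩ else
  if d = -8 ∧ b = 8 ∧ c = -8 then ⟨2,2,0,0,0,0,0,0⟩ else
  if d = -4 ∧ b = -8 ∧ c = 4 then ⟨-2,-2,0,0,0,0,0,0⟩ else
  if d = -4 ∧ b = -4 ∧ c = -4 then ⟨-2,0,-2,0,0,0,0,0⟩ else
  if d = -4 ∧ b = -4 ∧ c = 0 then ⟨0,-2,-2,0,0,0,0,0⟩ else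
  if d = -4 ∧ b = -4 ∧ c = 4 then ⟨0,-2,0,2,0,0,0,0⟩ else
  if d = -4 ∧ b = -4 ∧ c = 8 then ⟨0,-2,2,0,0,0,0,0⟩ else
  if d = -4 ∧ b = 0 ∧ c = -4 then ⟨0,0,-2,2,0,0,0,0⟩ else
  if d = -4 ∧ b = 0 ∧ c = 0 then ⟨1,-1,-1,1,1,1,1,1⟩ else
  if d = -4 ∧ b = 0 ∧ c = 4 then ⟨2,-2,0,0,0,0,0,0⟩ else
  if d = -4 ∧ b = 4 ∧ c = -8 then ⟨0,2,-2,0,0,0,0,0⟩ else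
  if d = -4 ∧ b = 4 ∧ c = -4 then ⟨2,0,-2,0,0,0,0,0⟩ else
  if d = -4 ∧ b = 4 ∧ c = 0 then ⟨2,0,0,2,0,0,0,0⟩ else
  if d = -4 ∧ b = 4 ∧ c = 4 then ⟨2,0,2,0,0,0,0,0⟩ else
  if d = -4 ∧ b = 8 ∧ c = -4 then ⟨2,2,0,0,0,0,0,0⟩ else
  if d = 0 ∧ b = -8 ∧ c = 0 then ⟨-2,-2,0,0,0,0,0,0⟩ else
  if d = 0 ∧ b = -4 ∧ c = -4 then ⟨-2,0,2,0,0,0,0,0⟩ else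
  if d = 0 ∧ b = -4 ∧ c = 0 then ⟨-1,-1,1,1,1,1,1,1⟩ else
  if d = 0 ∧ b = -4 ∧ c = 4 then ⟨0,-2,2,0,0,0,0,0⟩ else
  if d = 0 ∧ b = 0 ∧ c = -8 then ⟨-2,2,0,0,0,0,0,0⟩ else
  if d = 0 ∧ b = 0 ∧ c = -4 then ⟨-1,1,1,1,1,1,1,-1⟩ else
  if d = 0 ∧ b = 0 ∧ c = 0 then ⟨0,0,2,2,0,0,0,0⟩ else
  if d = 0 ∧ b = 0 ∧ c = 4 then ⟨1,-1,1,1,1,1,1,-1⟩ else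
  if d = 0 ∧ b = 0 ∧ c = 8 then ⟨2,-2,0,0,0,0,0,0⟩ else
  if d = 0 ∧ b = 4 ∧ c = -4 then ⟨0,2,2,0,0,0,0,0⟩ else
  if d = 0 ∧ b = 4 ∧ c = 0 then ⟨1,1,1,1,1,1,1,1⟩ else
  if d = 0 ∧ b = 4 ∧ c = 4 then ⟨2,0,2,0,0,0,0,0⟩ else
  if d = 0 ∧ b = 8 ∧ c = 0 then ⟨2,2,0,0,0,0,0,0⟩ else
  if d = 4 ∧ b = -8 ∧ c = -4 then ⟨-2,-2,0,0,0,0,0,0⟩ else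
  if d = 4 ∧ b = -4 ∧ c = -8 then ⟨-2,0,-2,0,0,0,0,0⟩ else
  if d = 4 ∧ b = -4 ∧ c = -4 then ⟨0,-2,-2,0,0,0,0,0⟩ else
  if d = 4 ∧ b = -4 ∧ c = 0 then ⟨0,-2,0,2,0,0,0,0⟩ else
  if d = 4 ∧ b = -4 ∧ c = 4 then ⟨0,-2,2,0,0,0,0,0⟩ else
  if d = 4 ∧ b = 0 ∧ c = -4 then ⟨0,0,-2,2,0,0,0,0⟩ else
  if d = 4 ∧ b = 0 ∧ c = 0 then ⟨1,-1,-1,1,1,1,1,1⟩ else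
  if d = 4 ∧ b = 0 ∧ c = 4 then ⟨2,-2,0,0,0,0,0,0⟩ else
  if d = 4 ∧ b = 4 ∧ c = -4 then ⟨0,2,-2,0,0,0,0,0⟩ else
  if d = 4 ∧ b = 4 ∧ c = 0 then ⟨2,0,-2,0,0,0,0,0⟩ else
  if d = 4 ∧ b = 4 ∧ c = 4 then ⟨2,0,0,2,0,0,0,0⟩ else
  if d = 4 ∧ b = 4 ∧ c = 8 then ⟨2,0,2,0,0,0,0,0⟩ else
  if d = 4 ∧ b = 8 ∧ c = 4 then ⟨2,2,0,0,0,0,0,0⟩ else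
  if d = 8 ∧ b = -8 ∧ c = -8 then ⟨-2,-2,0,0,0,0,0,0⟩ else
  if d = 8 ∧ b = -4 ∧ c = -4 then ⟨0,-2,2,0,0,0,0,0⟩ else
  if d = 8 ∧ b = 0 ∧ c = 0 then ⟨2,-2,0,0,0,0,0,0⟩ else
  if d = 8 ∧ b = 4 ∧ c = 4 then ⟨2,0,2,0,0,0,0,0⟩ else
  if d = 8 ∧ b = 8 ∧ c = 8 then ⟨2,2,0,0,0,0,0,0⟩ else
  th

/-- dominance check at one root -/
def chk (x : V8) : Bool :=
  decide (red w0 x = th) && decide (red w1 x = c2 (D x th)) &&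
  ([-8, -4, 0, 4, 8] : List ℤ).all (fun d => decide (red (w2 d) x = c3 d (D x th) (D x (c2 d)))) &&
  ([-8, -4, 0, 4, 8] : List ℤ).contains (D x th) &&
  ([q0, q1, q2, q3, q4, q5, q6, q7] : List Q).all
    (fun s => ([-8, -4, 0, 4, 8] : List ℤ).contains (D x (vec s)))

def chkAll (l : List ℤ) : Bool :=
  l.all fun a0 => l.all fun a1 => l.all fun a2 => l.all fun a3 =>
  l.all fun a4 => l.all fun a5 => l.all fun a6 => l.all fun a7 =>
    !(decide (D ⟨a0, a1, a2, a3, a4, a5, a6, a7⟩ ⟨a0, a1, a2, a3, a4, a5, a6, a7⟩ = 8)) ||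
    !(decide (sm ⟨a0, a1, a2, a3, a4, a5, a6, a7⟩ % 4 = 0)) ||
    chk ⟨a0, a1, a2, a3, a4, a5, a6, a7⟩

theorem chkOdd : chkAll [-1, 1] = true := by decide +kernel
theorem chkEven : chkAll [-2, 0, 2] = true := by decide +kernel

theorem dot_toR (v u : V8) : dot (toR v) (toR u) = (D v u : ℝ) / 4 := by
  simp [dot, toR, D, Fin.sum_univ_eight]
  ring

theorem toR_even (a b c d e f g h k : ℤ) (hk : a + b + c + d + e + f + g + h = 2 * k) :
    inLambda (toR ⟨2 * a, 2 * b, 2 * c, 2 * d, 2 * e, 2 * f, 2 * g, 2 * h⟩) := by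
  refine ⟨Or.inl fun i => ⟨![a, b, c, d, e, f, g, h] i, ?_⟩, k, ?_⟩
  · fin_cases i <;> simp [toR]
  · have : ((a + b + c + d + e + f + g + h : ℤ) : ℝ) = ((2 * k : ℤ) : ℝ) := by rw [hk]
    push_cast at this
    simp [toR, Fin.sum_univ_eight]
    linarith

theorem toR_odd (a b c d e f g h k : ℤ) (hk : a + b + c + d + e + f + g + h + 4 = 2 * k) :
    inLambda (toR ⟨2 * a + 1, 2 * b + 1, 2 * c + 1, 2 * d + 1, 2 * e + 1, 2 * f + 1, 2 * g + 1,
      2 * h + 1⟩) := by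
  refine ⟨Or.inr fun i => ⟨![a, b, c, d, e, f, g, h] i, ?_⟩, k, ?_⟩
  · fin_cases i <;> simp [toR] <;> ring
  · have : ((a + b + c + d + e + f + g + h + 4 : ℤ) : ℝ) = ((2 * k : ℤ) : ℝ) := by rw [hk]
    push_cast at this
    simp [toR, Fin.sum_univ_eight]
    linarith

theorem lam_vec (q : Q) : inLambda (toR (vec q)) := by
  cases q
  · have := toR_even 0 0 0 0 0 0 1 (-1) 0 (by norm_num)
    norm_num at this
    simpa only [vec] using this
  · have := toR_even 0 0 0 0 0 0 1 1 1 (by norm_num)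
    norm_num at this
    simpa only [vec] using this
  · have := toR_even 0 0 0 0 0 1 (-1) 0 0 (by norm_num)
    norm_num at this
    simpa only [vec] using this
  · have := toR_even 0 0 0 0 1 (-1) 0 0 0 (by norm_num)
    norm_num at this
    simpa only [vec] using this
  · have := toR_even 0 0 0 1 (-1) 0 0 0 0 (by norm_num)
    norm_num at this
    simpa only [vec] using this
  · have := toR_even 0 0 1 (-1) 0 0 0 0 0 (by norm_num)
    norm_num at this
    simpa only [vec] using this
  · have := toR_even 0 1 (-1) 0 0 0 0 0 0 (by norm_num)
    norm_num at this
    simpa only [vec] using this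
  · have := toR_odd 0 (-1) (-1) (-1) (-1) (-1) (-1) 0 (-1) (by norm_num)
    norm_num at this
    simpa only [vec] using this

theorem lam_sub {a b : Fin 8 → ℝ} (ha : inLambda a) (hb : inLambda b) : inLambda (a - b) := by
  obtain ⟨ha, k, hk⟩ := ha
  obtain ⟨hb, l, hl⟩ := hb
  refine ⟨?_, k - l, ?_⟩
  · rcases ha with ha | ha <;> rcases hb with hb | hb <;> choose m hm using ha <;>
      choose n hn using hb
    · left; intro i; refine ⟨m i - n i, ?_⟩
      simp [hm, hn]
    · right; intro i; refine ⟨m i - n i - 1, ?_⟩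
      simp [hm, hn]; ring
    · right; intro i; refine ⟨m i - n i, ?_⟩
      simp [hm, hn]; ring
    · left; intro i; refine ⟨m i - n i, ?_⟩
      simp [hm, hn]
  · simp only [Pi.sub_apply, Finset.sum_sub_distrib, hk, hl]
    push_cast; ring

theorem lam_zero : inLambda 0 := ⟨Or.inl fun i => ⟨0, by simp⟩, 0, by simp⟩

theorem chkAll_spec {l : List ℤ} (h : chkAll l = true) (v : V8)
    (h0 : v.x0 ∈ l) (h1 : v.x1 ∈ l) (h2 : v.x2 ∈ l) (h3 : v.x3 ∈ l) (h4 : v.x4 ∈ l)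
    (h5 : v.x5 ∈ l) (h6 : v.x6 ∈ l) (h7 : v.x7 ∈ l) (hD : D v v = 8) (hs : sm v % 4 = 0) :
    chk v = true := by
  unfold chkAll at h
  simp only [List.all_eq_true] at h
  have := h _ h0 _ h1 _ h2 _ h3 _ h4 _ h5 _ h6 _ h7
  change (!(decide (D v v = 8)) || !(decide (sm v % 4 = 0)) || chk v) = true at this
  simpa [hD, hs] using this

theorem sum_int {n : Fin 8 → ℤ} {m : ℤ} (hm : ∑ i, n i = m) (h0 : ∀ i, 0 ≤ n i) (i : Fin 8) :
    n i ≤ m := by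
  rw [← hm]
  exact Finset.single_le_sum (fun j _ => h0 j) (Finset.mem_univ i)

theorem exists_V8 {a : Fin 8 → ℝ} (ha : isRoot a) : ∃ v : V8, a = toR v ∧ chk v = true := by
  obtain ⟨⟨hp, k, hk⟩, hd⟩ := ha
  rcases hp with hp | hp <;> choose n hn using hp
  · have hd' : ∑ i, n i * n i = 2 := by
      have : ((∑ i, n i * n i : ℤ) : ℝ) = 2 := by
        rw [← hd]; push_cast; simp only [dot, hn]
      exact_mod_cast this
    have hk' : ∑ i, n i = 2 * k := by
      have : ((∑ i, n i : ℤ) : ℝ) = 2 * k := by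
        rw [← hk]; push_cast; simp only [hn]
      exact_mod_cast this
    have hm : ∀ i, 2 * n i ∈ ([-2, 0, 2] : List ℤ) := by
      intro i
      have h1 := sum_int hd' (fun i => mul_self_nonneg (n i)) i
      have h2 : n i ≤ 1 := by nlinarith
      have h3 : -1 ≤ n i := by nlinarith
      simp only [List.mem_cons, List.not_mem_nil, or_false]
      omega
    refine ⟨⟨2 * n 0, 2 * n 1, 2 * n 2, 2 * n 3, 2 * n 4, 2 * n 5, 2 * n 6, 2 * n 7⟩, ?_,
      chkAll_spec chkEven _ (hm _) (hm _) (hm _) (hm _) (hm _) (hm _) (hm _) (hm _) ?_ ?_⟩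
    · ext i
      fin_cases i <;> simp [toR, hn]
    · rw [Fin.sum_univ_eight] at hd'
      simp only [D]; linarith
    · rw [Fin.sum_univ_eight] at hk'
      simp only [sm]; omega
  · have hd' : ∑ i, n i * (n i + 1) = 0 := by
      have : ((∑ i, n i * (n i + 1) : ℤ) : ℝ) = 0 := by
        simp only [dot, hn, Fin.sum_univ_eight] at hd
        push_cast [Fin.sum_univ_eight]
        linarith
      exact_mod_cast this
    have hk' : ∑ i, n i + 4 = 2 * k := by
      have : ((∑ i, n i + 4 : ℤ) : ℝ) = 2 * k := by
        simp only [hn, Fin.sum_univ_eight] at hk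
        push_cast [Fin.sum_univ_eight]
        linarith
      exact_mod_cast this
    have hm : ∀ i, 2 * n i + 1 ∈ ([-1, 1] : List ℤ) := by
      intro i
      have h1 := sum_int hd' (fun i => by
        rcases le_or_gt 0 (n i) with h | h
        · positivity
        · nlinarith) i
      have h2 : n i ≤ 0 := by nlinarith
      have h3 : -1 ≤ n i := by nlinarith
      simp only [List.mem_cons, List.not_mem_nil, or_false]
      omega
    refine ⟨⟨2 * n 0 + 1, 2 * n 1 + 1, 2 * n 2 + 1, 2 * n 3 + 1, 2 * n 4 + 1, 2 * n 5 + 1,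
      2 * n 6 + 1, 2 * n 7 + 1⟩, ?_,
      chkAll_spec chkOdd _ (hm _) (hm _) (hm _) (hm _) (hm _) (hm _) (hm _) (hm _) ?_ ?_⟩
    · ext i
      fin_cases i <;> simp [toR, hn] <;> ring
    · rw [Fin.sum_univ_eight] at hd'
      simp only [D]; linarith
    · rw [Fin.sum_univ_eight] at hk'
      simp only [sm]; omega

theorem chk_spec {v : V8} (h : chk v = true) :
    red w0 v = th ∧ red w1 v = c2 (D v th) ∧
    (∀ d ∈ ([-8, -4, 0, 4, 8] : List ℤ), red (w2 d) v = c3 d (D v th) (D v (c2 d))) ∧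
    D v th ∈ ([-8, -4, 0, 4, 8] : List ℤ) ∧
    ∀ q, D v (vec q) ∈ ([-8, -4, 0, 4, 8] : List ℤ) := by
  unfold chk at h
  simp only [Bool.and_eq_true, decide_eq_true_eq, List.all_eq_true, List.contains_iff_mem] at h
  obtain ⟨⟨⟨⟨h1, h2⟩, h3⟩, h4⟩, h5⟩ := h
  exact ⟨h1, h2, h3, h4, fun q => h5 q (by cases q <;> simp)⟩

/-- the reflection in the vector `s` -/
def rfl0 (s : Fin 8 → ℝ) : (Fin 8 → ℝ) →ₗ[ℝ] (Fin 8 → ℝ) where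
  toFun y := y - dot y s • s
  map_add' x y := by
    ext i
    simp [dot, add_mul, Finset.sum_add_distrib]; ring
  map_smul' c x := by
    ext i
    simp [dot, mul_assoc, ← Finset.mul_sum]; ring

theorem rfl0_apply (s y : Fin 8 → ℝ) : rfl0 s y = y - dot y s • s := rfl

theorem dot_sub_smul (x y s : Fin 8 → ℝ) (c : ℝ) : dot (x - c • s) y = dot x y - c * dot s y := by
  simp [dot, sub_mul, Finset.sum_sub_distrib, mul_assoc, Finset.mul_sum]

theorem dot_comm' (x y : Fin 8 → ℝ) : dot x y = dot y x := by
  simp [dot, mul_comm]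

theorem dot_rfl0 {s : Fin 8 → ℝ} (hs : dot s s = 2) (x y : Fin 8 → ℝ) :
    dot (rfl0 s x) (rfl0 s y) = dot x y := by
  simp only [rfl0_apply]
  rw [dot_sub_smul, dot_comm' x, dot_comm' s, dot_sub_smul, dot_sub_smul, hs, dot_comm' s x,
    dot_comm' y x]
  ring

theorem rfl0_inv {s : Fin 8 → ℝ} (hs : dot s s = 2) : Function.Involutive (rfl0 s) := by
  intro x
  simp only [rfl0_apply]
  rw [dot_sub_smul, hs]
  ext i
  simp; ring

theorem vec_norm (q : Q) : dot (toR (vec q)) (toR (vec q)) = 2 := by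
  rw [dot_toR]
  cases q <;> norm_num [D, vec]

theorem rfl0_root {a : Fin 8 → ℝ} (ha : isRoot a) (q : Q) : isRoot (rfl0 (toR (vec q)) a) := by
  refine ⟨?_, by rw [dot_rfl0 (vec_norm q)]; exact ha.2⟩
  obtain ⟨v, rfl, hv⟩ := exists_V8 ha
  have hm := (chk_spec hv).2.2.2.2 q
  rw [rfl0_apply, dot_toR]
  have hl := lam_vec q
  have hn : inLambda (0 - toR (vec q)) := lam_sub lam_zero hl
  simp only [List.mem_cons, List.not_mem_nil, or_false] at hm
  rcases hm with h | h | h | h | h <;> rw [h]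
  · convert lam_sub (lam_sub ha.1 hn) hn using 1
    ext i; simp; ring
  · convert lam_sub ha.1 hn using 1
    ext i; simp
  · convert ha.1 using 1
    ext i; simp
  · convert lam_sub ha.1 hl using 1
    ext i; simp
  · convert lam_sub (lam_sub ha.1 hl) hl using 1
    ext i; simp; ring

def rflE (q : Q) : (Fin 8 → ℝ) ≃ₗ[ℝ] (Fin 8 → ℝ) :=
  LinearEquiv.ofInvolutive (rfl0 (toR (vec q))) (rfl0_inv (vec_norm q))

theorem rflE_apply (q : Q) (y : Fin 8 → ℝ) :
    rflE q y = y - dot y (toR (vec q)) • toR (vec q) := rfl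

theorem weyl_rflE (q : Q) : IsWeyl (rflE q) := by
  refine ⟨fun a b => dot_rfl0 (vec_norm q) a b, ?_⟩
  ext x
  constructor
  · rintro ⟨y, hy, rfl⟩
    exact rfl0_root hy q
  · intro hx
    exact ⟨rflE q x, rfl0_root hx q, rfl0_inv (vec_norm q) x⟩

theorem weyl_refl : IsWeyl (LinearEquiv.refl ℝ (Fin 8 → ℝ)) := by
  refine ⟨fun a b => rfl, ?_⟩
  ext x; simp

theorem weyl_trans {u w : (Fin 8 → ℝ) ≃ₗ[ℝ] (Fin 8 → ℝ)} (hu : IsWeyl u) (hw : IsWeyl w) :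
    IsWeyl (u.trans w) := by
  refine ⟨fun a b => ?_, ?_⟩
  · simp [hw.1, hu.1]
  · change (w ∘ u) '' _ = _
    rw [Set.image_comp]
    rw [hu.2, hw.2]

theorem weyl_symm {u : (Fin 8 → ℝ) ≃ₗ[ℝ] (Fin 8 → ℝ)} (hu : IsWeyl u) : IsWeyl u.symm := by
  refine ⟨fun a b => ?_, ?_⟩
  · rw [← hu.1]; simp
  · conv_lhs => rw [← hu.2]
    rw [← Set.image_comp]
    simp

theorem weyl_root {u : (Fin 8 → ℝ) ≃ₗ[ℝ] (Fin 8 → ℝ)} (hu : IsWeyl u) {a : Fin 8 → ℝ}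
    (ha : isRoot a) : isRoot (u a) := by
  have : u a ∈ u '' {a | isRoot a} := ⟨a, ha, rfl⟩
  rw [hu.2] at this
  exact this

theorem step_eq (x : V8) (q : Q) : step x q = x ∨ toR (step x q) = rflE q (toR x) := by
  obtain ⟨a, b, c, d, e, f, g, h⟩ := x
  rw [rflE_apply, dot_toR]
  cases q
  case q7 =>
    simp only [step, addm, frc_eq]
    split_ifs with h1 h2
    · right
      have : D ⟨a, b, c, d, e, f, g, h⟩ (vec q7) = -4 := by simp [D, vec]; linarith
      rw [this]
      ext i
      fin_cases i <;> simp [toR, vec] <;> ring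
    · right
      have : D ⟨a, b, c, d, e, f, g, h⟩ (vec q7) = -8 := by simp [D, vec]; linarith
      rw [this]
      ext i
      fin_cases i <;> simp [toR, vec] <;> ring
    · exact Or.inl rfl
  all_goals
    simp only [step, frc_eq]
    split_ifs with h1
    · right
      ext i
      fin_cases i <;> simp [toR, vec, D] <;> ring
    · exact Or.inl rfl

theorem red_spec (w : List Q) : ∀ x : V8, ∃ u : (Fin 8 → ℝ) ≃ₗ[ℝ] (Fin 8 → ℝ), IsWeyl u ∧
    (∀ y, (∀ q ∈ w, dot y (toR (vec q)) = 0) → u y = y) ∧ u (toR x) = toR (red w x) := by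
  induction w with
  | nil => exact fun x => ⟨_, weyl_refl, fun _ _ => rfl, rfl⟩
  | cons q w ih =>
    intro x
    obtain ⟨u, hu, hf, hx⟩ := ih (step x q)
    have hr : red (q :: w) x = red w (step x q) := rfl
    rcases step_eq x q with h | h
    · refine ⟨u, hu, fun y hy => hf y fun q hq => hy q (List.mem_cons_of_mem _ hq), ?_⟩
      rw [hr, ← hx, h]
    · refine ⟨(rflE q).trans u, weyl_trans (weyl_rflE q) hu, fun y hy => ?_, ?_⟩
      · have h0 : rflE q y = y := by
          rw [rflE_apply, hy q List.mem_cons_self]; simp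
        rw [LinearEquiv.trans_apply, h0]
        exact hf y fun q hq => hy q (List.mem_cons_of_mem _ hq)
      · rw [LinearEquiv.trans_apply, ← h, hx, hr]

theorem w1_th : ∀ q ∈ w1, D th (vec q) = 0 := by
  have : w1.all (fun q => decide (D th (vec q) = 0)) = true := by decide +kernel
  simpa using this

theorem w2_th : ∀ d ∈ ([-8, -4, 0, 4, 8] : List ℤ), ∀ q ∈ w2 d,
    D th (vec q) = 0 ∧ D (c2 d) (vec q) = 0 := by
  have : ([-8, -4, 0, 4, 8] : List ℤ).all (fun d => (w2 d).all (fun q =>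
    decide (D th (vec q) = 0 ∧ D (c2 d) (vec q) = 0))) = true := by decide +kernel
  simp only [List.all_eq_true, decide_eq_true_eq] at this
  exact this

theorem D_of_dot {v u : V8} {r : ℝ} (h : dot (toR v) (toR u) = r) : D v u = ⌊4 * r⌋ := by
  rw [dot_toR] at h
  rw [← h, show (4 : ℝ) * ((D v u : ℝ) / 4) = (D v u : ℝ) by ring, Int.floor_intCast]

theorem canon {e1 e2 e3 : Fin 8 → ℝ} {a b c : ℝ} (he1 : isRoot e1) (he2 : isRoot e2)
    (he3 : isRoot e3) (h12 : dot e1 e2 = a) (h23 : dot e2 e3 = b) (h13 : dot e1 e3 = c) :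
    ∃ w : (Fin 8 → ℝ) ≃ₗ[ℝ] (Fin 8 → ℝ), IsWeyl w ∧ w e1 = toR th ∧ w e2 = toR (c2 ⌊4 * a⌋) ∧
      w e3 = toR (c3 ⌊4 * a⌋ ⌊4 * c⌋ ⌊4 * b⌋) := by
  obtain ⟨v1, rfl, hv1⟩ := exists_V8 he1
  obtain ⟨u1, hu1, -, hx1⟩ := red_spec w0 v1
  rw [(chk_spec hv1).1] at hx1
  obtain ⟨v2, h2, hv2⟩ := exists_V8 (weyl_root hu1 he2)
  obtain ⟨u2, hu2, hf2, hx2⟩ := red_spec w1 v2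
  have hth : u2 (toR th) = toR th := hf2 _ fun q hq => by rw [dot_toR, w1_th q hq]; simp
  have hD2 : D v2 th = ⌊4 * a⌋ := D_of_dot (by rw [← h2, ← hx1, hu1.1, dot_comm', h12])
  have hmem := (chk_spec hv2).2.2.2.1
  rw [hD2] at hmem
  rw [(chk_spec hv2).2.1, hD2] at hx2
  obtain ⟨v3, h3, hv3⟩ := exists_V8 (weyl_root hu2 (weyl_root hu1 he3))
  obtain ⟨u3, hu3, hf3, hx3⟩ := red_spec (w2 ⌊4 * a⌋) v3
  have hth3 : u3 (toR th) = toR th := hf3 _ fun q hq => by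
    rw [dot_toR, (w2_th _ hmem q hq).1]; simp
  have hc3 : u3 (toR (c2 ⌊4 * a⌋)) = toR (c2 ⌊4 * a⌋) := hf3 _ fun q hq => by
    rw [dot_toR, (w2_th _ hmem q hq).2]; simp
  have hD3 : D v3 th = ⌊4 * c⌋ :=
    D_of_dot (by rw [← h3, ← hth, hu2.1, ← hx1, hu1.1, dot_comm', h13])
  have hD3' : D v3 (c2 ⌊4 * a⌋) = ⌊4 * b⌋ :=
    D_of_dot (by rw [← h3, ← hx2, hu2.1, ← h2, hu1.1, dot_comm', h23])
  rw [(chk_spec hv3).2.2.1 _ hmem, hD3, hD3'] at hx3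
  refine ⟨(u1.trans u2).trans u3, weyl_trans (weyl_trans hu1 hu2) hu3, ?_, ?_, ?_⟩
  · simp only [LinearEquiv.trans_apply, hx1, hth, hth3]
  · simp only [LinearEquiv.trans_apply, h2, hx2, hc3]
  · simp only [LinearEquiv.trans_apply, h3, hx3]

end V8

/-- For all `a, b, c ∈ {-2,-1,0,1}`, the Weyl group acts transitively on
the set of ordered triples of roots `(e1,e2,e3)` with `e1·e2 = a`, `e2·e3 = b`,
`e1·e3 = c`, whenever this set is nonempty. -/
theorem stmt_2 (a b c : ℝ)
    (ha : a ∈ ({-2, -1, 0, 1} : Set ℝ))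
    (hb : b ∈ ({-2, -1, 0, 1} : Set ℝ))
    (hc : c ∈ ({-2, -1, 0, 1} : Set ℝ))
    (e1 e2 e3 f1 f2 f3 : Fin 8 → ℝ)
    (he1 : isRoot e1) (he2 : isRoot e2) (he3 : isRoot e3)
    (hf1 : isRoot f1) (hf2 : isRoot f2) (hf3 : isRoot f3)
    (hde12 : dot e1 e2 = a) (hde23 : dot e2 e3 = b) (hde13 : dot e1 e3 = c)
    (hdf12 : dot f1 f2 = a) (hdf23 : dot f2 f3 = b) (hdf13 : dot f1 f3 = c) :
    ∃ w : (Fin 8 → ℝ) ≃ₗ[ℝ] (Fin 8 → ℝ),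
      IsWeyl w ∧ w e1 = f1 ∧ w e2 = f2 ∧ w e3 = f3 := by
  obtain ⟨w, hw, h1, h2, h3⟩ := V8.canon he1 he2 he3 hde12 hde23 hde13
  obtain ⟨u, hu, k1, k2, k3⟩ := V8.canon hf1 hf2 hf3 hdf12 hdf23 hdf13
  refine ⟨w.trans u.symm, V8.weyl_trans hw (V8.weyl_symm hu), ?_, ?_, ?_⟩
  · rw [LinearEquiv.trans_apply, h1, ← k1, LinearEquiv.symm_apply_apply]
  · rw [LinearEquiv.trans_apply, h2, ← k2, LinearEquiv.symm_apply_apply]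
  · rw [LinearEquiv.trans_apply, h3, ← k3, LinearEquiv.symm_apply_apply]
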